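/- Let n,m ≥ 1 and q ∈ ℂ with |q| = 1. Let H = ℓ²(List(Fin n) × List(Fin m); ℂ) with standard orthonormal basis (e_{(μ,ν)}) indexed by pairs of words, and let Ω = e_{([],[])}. There exist bounded operators S_1,…,S_n and T_1,…,T_m on H determined by S_j e_{(μ,ν)} = e_{(j::μ, ν)} and T_r e_{(μ,ν)} = q^{|μ|} e_{(μ, r::ν)} (where |μ| is the length of μ and j::μ denotes prepending j), and they satisfy: each S_j and each T_r is an isometry; S_i* S_j = 0 for i ≠ j; T_r* T_l = 0 for r ≠ l; S_j* T_r = q T_r S_j* and T_r S_j = q S_j T_r for all j,r; and S_j* Ω = 0 and T_r* Ω = 0 for all j,r. (Thus the operators S_j, T_r realize the Fock representation of the relations E_{n,m}^q with vacuum vector Ω.) -/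

import Mathlib

noncomputable section

/-- Index set of the Fock space: pairs of words in the alphabets `{1,…,n}` and `{1,…,m}`. -/
abbrev FockIdx (n m : ℕ) := List (Fin n) × List (Fin m)

/-- The Fock space `ℓ²(List (Fin n) × List (Fin m); ℂ)`. -/
abbrev Fock (n m : ℕ) := lp (fun _ : FockIdx n m => ℂ) 2

/-!
Each creation operator is a weighted shift of `ℓ²`: it maps the orthonormal basis injectively into
itself, up to scalars of modulus one, and is therefore an isometry whose adjoint undoes the shift
and annihilates the basis vectors outside its range. Every relation can thus be checked on basis
vectors. If `V` is such a shift and `A V = q V B`, then `V* A V = q B = q B V* V`, so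
`V* A = q B V*` holds on the range of `V`, and only the basis vectors outside it are left to check.
-/

open scoped lp InnerProductSpace

section WeightedShift

open ContinuousLinearMap (adjoint)

variable {𝕜 ι κ : Type*} [RCLike 𝕜]

theorem lp_continuousLinearMap_ext_single_one {R F : Type*} [NormedRing R] [AddCommMonoid F]
    [Module R F] [TopologicalSpace F] [T2Space F] [DecidableEq ι] {p : ENNReal} [Fact (1 ≤ p)]
    (hp : p ≠ ⊤) {A B : lp (fun _ : ι => R) p →L[R] F}
    (h : ∀ i, A (lp.single p i 1) = B (lp.single p i 1)) : A = B :=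
  lp.ext_continuousLinearMap hp fun i => ContinuousLinearMap.ext_ring (h i)

theorem orthonormal_lp_single_one [DecidableEq ι] :
    Orthonormal 𝕜 fun i => (lp.single 2 i 1 : ℓ²(ι, 𝕜)) := by
  rw [orthonormal_iff_ite]
  intro i j
  simp [lp.inner_single_left, Pi.single_apply]

theorem orthonormal_unitary_smul {E : Type*} [SeminormedAddCommGroup E] [InnerProductSpace 𝕜 E]
    {v : ι → E} (hv : Orthonormal 𝕜 v) (c : ι → unitary 𝕜) :
    Orthonormal 𝕜 fun i => (c i : 𝕜) • v i := by
  refine ⟨fun i => ?_, fun i j hij => ?_⟩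
  · rw [norm_smul, CStarRing.norm_coe_unitary, hv.1, one_mul]
  · simp only [inner_smul_left, inner_smul_right, hv.2 hij, mul_zero]

/-- The weighted shift `ℓ²(ι) → ℓ²(κ)` along an injection `g : ι ↪ κ`, with weights `c i` of modulus
one (encoded as unitary scalars): the isometry sending `e_i` to `c i • e_{g i}`. -/
def weightedShift [DecidableEq κ] (g : ι ↪ κ) (c : ι → unitary 𝕜) : ℓ²(ι, 𝕜) →L[𝕜] ℓ²(κ, 𝕜) :=
  (orthonormal_unitary_smul (orthonormal_lp_single_one.comp g g.injective)
    c).orthogonalFamily.linearIsometry.toContinuousLinearMap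

variable [DecidableEq κ] (g : ι ↪ κ) (c : ι → unitary 𝕜)

theorem adjoint_weightedShift_comp_self :
    adjoint (weightedShift g c) ∘L weightedShift g c = 1 :=
  LinearIsometry.adjoint_comp_self _

theorem weightedShift_single [DecidableEq ι] (i : ι) :
    weightedShift g c (lp.single 2 i 1) = (c i : 𝕜) • lp.single 2 (g i) 1 := by
  simp [weightedShift]

theorem single_eq_smul_weightedShift [DecidableEq ι] (i : ι) :
    (lp.single 2 (g i) 1 : ℓ²(κ, 𝕜)) = star (c i : 𝕜) • weightedShift g c (lp.single 2 i 1) := by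
  rw [weightedShift_single, smul_smul, Unitary.coe_star_mul_self, one_smul]

theorem adjoint_weightedShift_single_of_notMem_range {k : κ} (hk : k ∉ Set.range g) :
    adjoint (weightedShift g c) (lp.single 2 k 1) = 0 := by
  classical
  ext i
  have hik : k ≠ g i := fun h => hk ⟨i, h.symm⟩
  have hinner : ⟪lp.single 2 i 1, adjoint (weightedShift g c) (lp.single 2 k 1)⟫_𝕜 = 0 := by
    rw [ContinuousLinearMap.adjoint_inner_right, weightedShift_single, inner_smul_left,
      orthonormal_lp_single_one.2 hik.symm, mul_zero]
  simpa [lp.inner_single_left] using hinner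

theorem adjoint_weightedShift_comp_of_disjoint_range {ι' : Type*} {g' : ι' ↪ κ}
    (hgg' : Disjoint (Set.range g) (Set.range g')) (c' : ι' → unitary 𝕜) :
    adjoint (weightedShift g c) ∘L weightedShift g' c' = 0 := by
  classical
  refine lp_continuousLinearMap_ext_single_one (by simp) fun i => ?_
  have hi : g' i ∉ Set.range g := hgg'.notMem_of_mem_right ⟨i, rfl⟩
  rw [ContinuousLinearMap.comp_apply, weightedShift_single, map_smul,
    adjoint_weightedShift_single_of_notMem_range g c hi, smul_zero, zero_apply]

theorem adjoint_weightedShift_comp_eq_smul {A : ℓ²(κ, 𝕜) →L[𝕜] ℓ²(κ, 𝕜)}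
    {B : ℓ²(ι, 𝕜) →L[𝕜] ℓ²(ι, 𝕜)} {q : 𝕜}
    (hcomm : A ∘L weightedShift g c = q • (weightedShift g c ∘L B))
    (hker : ∀ k ∉ Set.range g, adjoint (weightedShift g c) (A (lp.single 2 k 1)) = 0) :
    adjoint (weightedShift g c) ∘L A = q • (B ∘L adjoint (weightedShift g c)) := by
  classical
  have hiso (x) : adjoint (weightedShift g c) (weightedShift g c x) = x :=
    congr($(adjoint_weightedShift_comp_self g c) x)
  have hcomm_apply (x) : A (weightedShift g c x) = q • weightedShift g c (B x) :=
    congr($hcomm x)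
  have hrange (x) : adjoint (weightedShift g c) (A (weightedShift g c x)) =
      q • B (adjoint (weightedShift g c) (weightedShift g c x)) := by
    rw [hcomm_apply, map_smul, hiso, hiso]
  refine lp_continuousLinearMap_ext_single_one (by simp) fun k => ?_
  simp only [ContinuousLinearMap.comp_apply, smul_apply]
  by_cases hk : k ∈ Set.range g
  · obtain ⟨i, rfl⟩ := hk
    simp only [single_eq_smul_weightedShift g c i, map_smul, hrange]
    rw [smul_comm]
  · rw [hker k hk, adjoint_weightedShift_single_of_notMem_range g c hk, map_zero, smul_zero]

end WeightedShift

section Creation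

variable {𝕜 α β : Type*} [RCLike 𝕜]

/-- Prepending the letter `a` to the first word of a pair. -/
def consFst (a : α) : List α × List β ↪ List α × List β :=
  .prodMap ⟨List.cons a, List.cons_injective⟩ (.refl _)

/-- Prepending the letter `b` to the second word of a pair. -/
def consSnd (b : β) : List α × List β ↪ List α × List β :=
  .prodMap (.refl _) ⟨List.cons b, List.cons_injective⟩

theorem mem_range_consFst {a : α} {p : List α × List β} :
    p ∈ Set.range (consFst a) ↔ ∃ μ, p.1 = a :: μ := by
  simp [consFst, eq_comm]

theorem mem_range_consSnd {b : β} {p : List α × List β} :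
    p ∈ Set.range (consSnd b) ↔ ∃ ν, p.2 = b :: ν := by
  simp [consSnd, eq_comm]

theorem disjoint_range_consFst {a a' : α} (haa' : a ≠ a') :
    Disjoint (Set.range (consFst (β := β) a)) (Set.range (consFst a')) := by
  simp +contextual [Set.disjoint_left, mem_range_consFst, haa', -Set.mem_range]

theorem disjoint_range_consSnd {b b' : β} (hbb' : b ≠ b') :
    Disjoint (Set.range (consSnd (α := α) b)) (Set.range (consSnd b')) := by
  simp +contextual [Set.disjoint_left, mem_range_consSnd, hbb', -Set.mem_range]

variable [DecidableEq α] [DecidableEq β]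

variable (𝕜 β) in
/-- The creation operator `S_a : e_(μ,ν) ↦ e_(a::μ,ν)` on the Fock space. -/
def creationFst (a : α) : ℓ²(List α × List β, 𝕜) →L[𝕜] ℓ²(List α × List β, 𝕜) :=
  weightedShift (consFst a) 1

variable (α) in
/-- The `q`-twisted creation operator `T_b : e_(μ,ν) ↦ q ^ |μ| • e_(μ,b::ν)` on the Fock space. -/
def creationSnd (q : unitary 𝕜) (b : β) :
    ℓ²(List α × List β, 𝕜) →L[𝕜] ℓ²(List α × List β, 𝕜) :=
  weightedShift (consSnd b) fun p => q ^ p.1.length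

theorem creationFst_single (a : α) (p : List α × List β) :
    creationFst 𝕜 β a (lp.single 2 p 1) = lp.single 2 (a :: p.1, p.2) 1 :=
  (weightedShift_single (consFst a) 1 p).trans (one_smul 𝕜 _)

theorem creationSnd_single (q : unitary 𝕜) (b : β) (p : List α × List β) :
    creationSnd α q b (lp.single 2 p 1) =
      (q : 𝕜) ^ p.1.length • lp.single 2 (p.1, b :: p.2) 1 :=
  weightedShift_single (consSnd b) (fun p => q ^ p.1.length) p

theorem creationSnd_mul_creationFst (q : unitary 𝕜) (a : α) (b : β) :
    creationSnd α q b * creationFst 𝕜 β a =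
      (q : 𝕜) • (creationFst 𝕜 β a * creationSnd α q b) := by
  refine lp_continuousLinearMap_ext_single_one (by simp) fun p => ?_
  simp only [mul_apply_eq_comp, smul_apply, creationFst_single,
    creationSnd_single, map_smul, smul_smul, List.length_cons, pow_succ']

theorem star_creationFst_mul_creationSnd (q : unitary 𝕜) (a : α) (b : β) :
    star (creationFst 𝕜 β a) * creationSnd α q b =
      (q : 𝕜) • (creationSnd α q b * star (creationFst 𝕜 β a)) := by
  refine adjoint_weightedShift_comp_eq_smul (consFst a) 1
    (creationSnd_mul_creationFst q a b) fun p hp => ?_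
  have hp' : (p.1, b :: p.2) ∉ Set.range (consFst a) := by
    rwa [mem_range_consFst] at hp ⊢
  rw [creationSnd_single, map_smul, adjoint_weightedShift_single_of_notMem_range _ _ hp',
    smul_zero]

theorem star_creationFst_vacuum (a : α) :
    star (creationFst 𝕜 β a) (lp.single 2 ([], []) 1) = 0 :=
  adjoint_weightedShift_single_of_notMem_range _ _ (by simp [mem_range_consFst, -Set.mem_range])

theorem star_creationSnd_vacuum (q : unitary 𝕜) (b : β) :
    star (creationSnd α q b) (lp.single 2 ([], []) 1) = 0 :=
  adjoint_weightedShift_single_of_notMem_range _ _ (by simp [mem_range_consSnd, -Set.mem_range])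

end Creation

theorem stmt_19_general {𝕜 α β : Type*} [RCLike 𝕜] [DecidableEq α] [DecidableEq β]
    (q : 𝕜) (hq : ‖q‖ = 1) :
    ∃ (S : α → ℓ²(List α × List β, 𝕜) →L[𝕜] ℓ²(List α × List β, 𝕜))
      (T : β → ℓ²(List α × List β, 𝕜) →L[𝕜] ℓ²(List α × List β, 𝕜)),
      (∀ a p, S a (lp.single 2 p 1) = lp.single 2 (a :: p.1, p.2) 1) ∧
      (∀ b p, T b (lp.single 2 p 1) = q ^ p.1.length • lp.single 2 (p.1, b :: p.2) 1) ∧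
      (∀ a, star (S a) * S a = 1) ∧
      (∀ b, star (T b) * T b = 1) ∧
      (∀ a a', a ≠ a' → star (S a) * S a' = 0) ∧
      (∀ b b', b ≠ b' → star (T b) * T b' = 0) ∧
      (∀ a b, star (S a) * T b = q • (T b * star (S a))) ∧
      (∀ a b, T b * S a = q • (S a * T b)) ∧
      (∀ a, star (S a) (lp.single 2 ([], []) 1) = 0) ∧
      (∀ b, star (T b) (lp.single 2 ([], []) 1) = 0) := by
  lift q to unitary 𝕜 using Unitary.mem_iff_star_mul_self.2 (by simp [RCLike.conj_mul, hq])
  exact ⟨creationFst 𝕜 β, creationSnd α q, creationFst_single, creationSnd_single q,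
    fun _ => adjoint_weightedShift_comp_self _ _,
    fun _ => adjoint_weightedShift_comp_self _ _,
    fun _ _ h => adjoint_weightedShift_comp_of_disjoint_range _ _ (disjoint_range_consFst h) _,
    fun _ _ h => adjoint_weightedShift_comp_of_disjoint_range _ _ (disjoint_range_consSnd h) _,
    star_creationFst_mul_creationSnd q, creationSnd_mul_creationFst q,
    star_creationFst_vacuum, star_creationSnd_vacuum q⟩

theorem stmt_19 (n m : ℕ) (hn : 1 ≤ n) (hm : 1 ≤ m) (q : ℂ) (hq : ‖q‖ = 1) :
    ∃ (S : Fin n → Fock n m →L[ℂ] Fock n m) (T : Fin m → Fock n m →L[ℂ] Fock n m),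
      (∀ (j : Fin n) (p : FockIdx n m),
        S j (lp.single 2 p 1) = lp.single 2 (j :: p.1, p.2) 1) ∧
      (∀ (r : Fin m) (p : FockIdx n m),
        T r (lp.single 2 p 1) = q ^ p.1.length • lp.single 2 (p.1, r :: p.2) 1) ∧
      (∀ j, star (S j) * S j = 1) ∧
      (∀ r, star (T r) * T r = 1) ∧
      (∀ i j, i ≠ j → star (S i) * S j = 0) ∧
      (∀ r l, r ≠ l → star (T r) * T l = 0) ∧
      (∀ (j : Fin n) (r : Fin m), star (S j) * T r = q • (T r * star (S j))) ∧
      (∀ (j : Fin n) (r : Fin m), T r * S j = q • (S j * T r)) ∧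
      (∀ j, star (S j) (lp.single 2 (([], []) : FockIdx n m) 1) = 0) ∧
      (∀ r, star (T r) (lp.single 2 (([], []) : FockIdx n m) 1) = 0) := by
  exact stmt_19_general q hq
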